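/- (Pfaffian factorization under a vanishing block) Let $N, a, b$ be positive integers with $a < b \le N$, $N$ and $b-a$ even. Let $A(x)$ be an $N \times N$ skew-symmetric matrix whose entries are polynomials in $x$, such that for every $i$ with $a+1 \le i \le b$ and every $j$, the entry $A_{i,j}(x)$ is divisible by $x+s$ (for a fixed real number $s$). Then $\left(\frac{1}{(x+s)^{(b-a)/2}} \operatorname{Pf} A(x)\right)\Big|_{x=-s} = \operatorname{Pf}(\widetilde{A}) \cdot \operatorname{Pf}(S)$, where $\widetilde{A}$ is the matrix obtained from $A$ by deleting rows and columns $a+1, \dots, b$ and then setting $x = -s$, and $S$ is the $(b-a)\times(b-a)$ matrix with entries $\left(\frac{1}{x+s} A_{i,j}(x)\right)\big|_{x=-s}$ for $a+1 \le i,j \le b$. -/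

import Mathlib

/-- The Pfaffian of an `n × n` matrix (intended for skew-symmetric matrices of
even size `n`), defined via the standard sum over all permutations:
`Pf A = (2^(n/2) (n/2)!)⁻¹ ∑_σ sgn(σ) ∏_{i<n/2} A_{σ(2i), σ(2i+1)}`.
For skew-symmetric matrices of even size this agrees with the sum over perfect
matchings with crossing signs. -/
noncomputable def pfaffian {R : Type*} [CommRing R] [Algebra ℚ R] {n : ℕ}
    (A : Matrix (Fin n) (Fin n) R) : R :=
  ((2 ^ (n / 2) * (n / 2).factorial : ℚ)⁻¹) •
    ∑ σ : Equiv.Perm (Fin n),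
      (Equiv.Perm.sign σ : ℤ) •
        ∏ i : Fin (n / 2),
          A (σ ⟨2 * i.1, by have := i.2; omega⟩)
            (σ ⟨2 * i.1 + 1, by have := i.2; omega⟩)

/-- The embedding of indices obtained by deleting the (0-based) index block
`[a, b)` from `Fin N`. -/
def delEmb (N a b : ℕ) (i : Fin (N - (b - a))) : Fin N :=
  if i.1 < a then ⟨i.1, by have := i.2; omega⟩
  else ⟨i.1 + (b - a), by have := i.2; omega⟩

/-!
Multiply a pairing by `t = x + s`, one factor for each of its pairs that meets the block. A pair
inside the block uses up two of the `b - a` indices of the block, a pair that crosses its boundary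
only one, so every pairing contributes a multiple of `t ^ ((b - a) / 2)`, and a multiple of a
strictly higher power of `t` as soon as some pair crosses. At `x = -s` only the pairings without
crossing pairs survive, and these make up the Pfaffian of a block diagonal matrix. The block can be
moved to the front without changing the Pfaffian, because it has even size.
-/

open Equiv Finset Matrix

section QuotientValue

variable {R S ι : Type*} [CommRing R] [CommRing S] {φ : R →+* S} {t : R} {k : ℕ}

/-- `x` is divisible by `t ^ k`, and `φ` takes the value `y` on some quotient. For
`φ = Polynomial.evalRingHom x₀` this is the value at `x₀` of the polynomial divided by `t ^ k`. -/
def HasQuotientValue (φ : R →+* S) (t : R) (k : ℕ) (x : R) (y : S) : Prop :=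
  ∃ q, x = t ^ k * q ∧ φ q = y

namespace HasQuotientValue

variable {x : R} {y : S}

theorem zsmul (h : HasQuotientValue φ t k x y) (n : ℤ) :
    HasQuotientValue φ t k (n • x) (n • y) := by
  obtain ⟨q, rfl, rfl⟩ := h
  exact ⟨n • q, (mul_smul_comm _ _ _).symm, map_zsmul φ n q⟩

theorem rat_smul [Algebra ℚ R] [Algebra ℚ S] (h : HasQuotientValue φ t k x y) (c : ℚ) :
    HasQuotientValue φ t k (c • x) (c • y) := by
  obtain ⟨q, rfl, rfl⟩ := h
  exact ⟨c • q, (mul_smul_comm _ _ _).symm, map_rat_smul φ c q⟩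

theorem sum {s : Finset ι} {x : ι → R} {y : ι → S}
    (h : ∀ i ∈ s, HasQuotientValue φ t k (x i) (y i)) :
    HasQuotientValue φ t k (∑ i ∈ s, x i) (∑ i ∈ s, y i) := by
  choose! q hx hy using h
  exact ⟨∑ i ∈ s, q i, by rw [mul_sum, sum_congr rfl hx], by rw [map_sum, sum_congr rfl hy]⟩

theorem prod {s : Finset ι} {k : ι → ℕ} {x : ι → R} {y : ι → S}
    (h : ∀ i ∈ s, HasQuotientValue φ t (k i) (x i) (y i)) :
    HasQuotientValue φ t (∑ i ∈ s, k i) (∏ i ∈ s, x i) (∏ i ∈ s, y i) := by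
  choose! q hx hy using h
  refine ⟨∏ i ∈ s, q i, ?_, by rw [map_prod, prod_congr rfl hy]⟩
  rw [← prod_pow_eq_pow_sum, ← prod_mul_distrib, prod_congr rfl hx]

theorem zero_of_lt {m : ℕ} (h : HasQuotientValue φ t m x y) (ht : φ t = 0) (hkm : k < m) :
    HasQuotientValue φ t k x 0 := by
  obtain ⟨q, rfl, -⟩ := h
  refine ⟨t ^ (m - k) * q, ?_, ?_⟩
  · rw [← mul_assoc, ← pow_add, Nat.add_sub_cancel' hkm.le]
  · rw [map_mul, map_pow, ht, zero_pow (Nat.sub_ne_zero_of_lt hkm), zero_mul]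

end HasQuotientValue

end QuotientValue

section PairProd

variable {R ι κ α : Type*} [CommRing R] [Fintype ι] [Fintype κ]

/-- The product of the entries of `M` at the pairs `(e (i, 0), e (i, 1))` listed by `e`. -/
def pairProd (e : ι × Fin 2 ≃ α) (M : Matrix α α R) : R :=
  ∏ i, M (e (i, 0)) (e (i, 1))

theorem pairProd_prodCongrLeft_trans (h : κ ≃ ι) (e : ι × Fin 2 ≃ α) (M : Matrix α α R) :
    pairProd ((prodCongrLeft fun _ => h).trans e) M = pairProd e M :=
  Fintype.prod_equiv h _ _ fun _ => rfl

theorem sum_pairs [Fintype α] (e : ι × Fin 2 ≃ α) (f : α → ℕ) :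
    ∑ i, (f (e (i, 0)) + f (e (i, 1))) = ∑ x, f x := by
  rw [← e.sum_comp, Fintype.sum_prod_type]
  simp only [Fin.sum_univ_two]

end PairProd

section Unsplit

variable {R S ι ι₁ ι₂ α₁ α₂ : Type*} [CommRing R] [CommRing S]
  [Fintype ι]

theorem pairProd_fromBlocks_zero_of_split {e : ι × Fin 2 ≃ α₁ ⊕ α₂} {i : ι}
    (hi : (e (i, 0)).isLeft ≠ (e (i, 1)).isLeft) (M₁ : Matrix α₁ α₁ R) (M₂ : Matrix α₂ α₂ R) :
    pairProd e (fromBlocks M₁ 0 0 M₂) = 0 := by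
  refine prod_eq_zero (mem_univ i) ?_
  generalize e (i, 0) = x at hi ⊢
  generalize e (i, 1) = y at hi ⊢
  rcases x with x | x <;> rcases y with y | y <;> first | rfl | exact absurd rfl hi

variable {φ : R →+* S} {t : R}

theorem hasQuotientValue_fromBlocks (B₁₁ : Matrix α₁ α₁ R) (B₁₂ : Matrix α₁ α₂ R)
    (B₂₁ : Matrix α₂ α₁ R) (M₂₂ : Matrix α₂ α₂ R) (x y : α₁ ⊕ α₂) :
    HasQuotientValue φ t (if x.isLeft ∨ y.isLeft then 1 else 0)
      (fromBlocks (t • B₁₁) (t • B₁₂) (t • B₂₁) M₂₂ x y)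
      (φ (fromBlocks B₁₁ B₁₂ B₂₁ M₂₂ x y)) := by
  rcases x with x | x <;> rcases y with y | y <;> exact ⟨_, by simp, rfl⟩

variable [Fintype α₁]

theorem sum_isLeft_pairs (e : ι × Fin 2 ≃ α₁ ⊕ α₂) :
    ∑ i, ((if (e (i, 0)).isLeft then 1 else 0) + if (e (i, 1)).isLeft then 1 else 0) =
      Fintype.card α₁ := by
  have : Fintype (α₁ ⊕ α₂) := .ofEquiv _ e
  rw [sum_pairs e fun x => if x.isLeft then 1 else 0, ← card_filter, ← Fintype.card_subtype,
    Fintype.card_congr sumIsLeft]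

theorem two_mul_card_isLeft_pairs {e : ι × Fin 2 ≃ α₁ ⊕ α₂}
    (he : ∀ i, (e (i, 0)).isLeft = (e (i, 1)).isLeft) :
    2 * #{i | (e (i, 0)).isLeft} = Fintype.card α₁ := by
  rw [← sum_isLeft_pairs e, card_filter, mul_sum]
  simp only [he, two_mul]

theorem exists_perm_isLeft_pairs [Fintype ι₁] [Finite ι₂] {e : (ι₁ ⊕ ι₂) × Fin 2 ≃ α₁ ⊕ α₂}
    (he : ∀ i, (e (i, 0)).isLeft = (e (i, 1)).isLeft)
    (hcard : Fintype.card α₁ = 2 * Fintype.card ι₁) :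
    ∃ τ : Perm (ι₁ ⊕ ι₂), ∀ i, (e (τ i, 0)).isLeft = i.isLeft := by
  have := Fintype.ofFinite ι₂
  have hcard' : Fintype.card {i : ι₁ ⊕ ι₂ // i.isLeft} =
      Fintype.card {i // (e (i, 0)).isLeft} := by
    have := two_mul_card_isLeft_pairs he
    rw [Fintype.card_congr sumIsLeft, Fintype.card_subtype]
    omega
  let f := Fintype.equivOfCardEq hcard'
  refine ⟨f.extendSubtype, fun i => Bool.eq_iff_iff.2 ⟨?_, f.extendSubtype_mem i⟩⟩
  exact not_imp_not.1 (f.extendSubtype_not_mem i)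

theorem hasQuotientValue_pairProd (ht : φ t = 0) (e : ι × Fin 2 ≃ α₁ ⊕ α₂)
    (B₁₁ : Matrix α₁ α₁ R) (B₁₂ : Matrix α₁ α₂ R) (B₂₁ : Matrix α₂ α₁ R) (M₂₂ : Matrix α₂ α₂ R) :
    HasQuotientValue φ t (Fintype.card α₁ / 2)
      (pairProd e (fromBlocks (t • B₁₁) (t • B₁₂) (t • B₂₁) M₂₂))
      (pairProd e (fromBlocks (B₁₁.map φ) 0 0 (M₂₂.map φ))) := by
  have key := HasQuotientValue.prod (s := univ) fun i _ =>
    hasQuotientValue_fromBlocks (φ := φ) (t := t) B₁₁ B₁₂ B₂₁ M₂₂ (e (i, 0)) (e (i, 1))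
  by_cases he : ∀ i, (e (i, 0)).isLeft = (e (i, 1)).isLeft
  · convert key using 1
    · simp only [he, or_self, ← card_filter, ← two_mul_card_isLeft_pairs he]
      omega
    · rfl
    · refine prod_congr rfl fun i _ => ?_
      have hi := he i
      generalize e (i, 0) = x at hi ⊢
      generalize e (i, 1) = y at hi ⊢
      rcases x with x | x <;> rcases y with y | y <;> first | rfl | cases hi
  · obtain ⟨i, hi⟩ := not_forall.1 he
    rw [pairProd_fromBlocks_zero_of_split hi]
    refine key.zero_of_lt ht (Nat.div_lt_of_lt_mul ?_)
    rw [← sum_isLeft_pairs e, mul_sum]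
    refine sum_lt_sum (fun j _ => ?_) ⟨i, mem_univ i, ?_⟩
    · cases (e (j, 0)).isLeft <;> cases (e (j, 1)).isLeft <;> decide
    · revert hi
      cases (e (i, 0)).isLeft <;> cases (e (i, 1)).isLeft <;> decide

end Unsplit

section PairingSum

variable {R S ι κ α β : Type*} [CommRing R] [CommRing S] [Fintype ι] [Fintype κ]
  [Fintype α] [DecidableEq α] [Fintype β] [DecidableEq β]

/-- The Pfaffian of `M` without its normalization, for an arbitrary index set whose elements are
listed by `e` as a family of ordered pairs. -/
def pairingSum (e : ι × Fin 2 ≃ α) (M : Matrix α α R) : R :=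
  ∑ σ : Perm α, (Perm.sign σ : ℤ) • pairProd (e.trans σ) M

theorem pairingSum_trans (e : ι × Fin 2 ≃ α) (g : α ≃ β) (M : Matrix β β R) :
    pairingSum (e.trans g) M = pairingSum e (M.submatrix g g) := by
  refine (Fintype.sum_equiv g.permCongr _ _ fun σ => ?_).symm
  simp [pairProd, permCongr_apply]

theorem pairingSum_trans_perm (e : ι × Fin 2 ≃ α) (τ : Perm α) (M : Matrix α α R) :
    pairingSum (e.trans τ) M = (Perm.sign τ : ℤ) • pairingSum e M := by
  rw [pairingSum, pairingSum, smul_sum]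
  refine Fintype.sum_equiv (Equiv.mulRight τ) _ _ fun σ => ?_
  rw [coe_mulRight, smul_smul, ← Units.val_mul, Perm.sign_mul, mul_left_comm,
    Int.units_mul_self, mul_one]
  rfl

theorem pairingSum_prodCongrLeft_trans (h : κ ≃ ι) (e : ι × Fin 2 ≃ α) (M : Matrix α α R) :
    pairingSum ((prodCongrLeft fun _ => h).trans e) M = pairingSum e M := by
  simp only [pairingSum, trans_assoc, pairProd_prodCongrLeft_trans]

theorem hasQuotientValue_pairingSum {α₁ α₂ : Type*} [Fintype α₁] [Fintype α₂] [DecidableEq α₁]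
    [DecidableEq α₂] {φ : R →+* S} {t : R} (ht : φ t = 0) (e : ι × Fin 2 ≃ α₁ ⊕ α₂)
    (B₁₁ : Matrix α₁ α₁ R) (B₁₂ : Matrix α₁ α₂ R) (B₂₁ : Matrix α₂ α₁ R) (M₂₂ : Matrix α₂ α₂ R) :
    HasQuotientValue φ t (Fintype.card α₁ / 2)
      (pairingSum e (fromBlocks (t • B₁₁) (t • B₁₂) (t • B₂₁) M₂₂))
      (pairingSum e (fromBlocks (B₁₁.map φ) 0 0 (M₂₂.map φ))) :=
  .sum fun _ _ => (hasQuotientValue_pairProd ht _ B₁₁ B₁₂ B₂₁ M₂₂).zsmul _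

end PairingSum

section PermPairs

variable {R ι α : Type*} [CommRing R]

/-- The permutation of the index set which permutes the pairs listed by `e` according to `τ`. -/
def permPairs (e : ι × Fin 2 ≃ α) (τ : Perm ι) : Perm α :=
  e.permCongr (prodCongrLeft fun _ => τ)

@[simp]
theorem permPairs_apply (e : ι × Fin 2 ≃ α) (τ : Perm ι) (i : ι) (j : Fin 2) :
    permPairs e τ (e (i, j)) = e (τ i, j) := by
  simp [permPairs, permCongr_apply]

theorem permPairs_mul (e : ι × Fin 2 ≃ α) (τ τ' : Perm ι) :
    permPairs e (τ * τ') = permPairs e τ * permPairs e τ' := by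
  ext x
  obtain ⟨⟨i, j⟩, rfl⟩ := e.surjective x
  simp

theorem trans_permPairs (e : ι × Fin 2 ≃ α) (τ : Perm ι) :
    e.trans (permPairs e τ) = (prodCongrLeft fun _ => τ).trans e := by
  ext ⟨i, j⟩
  simp

variable [Fintype α] [DecidableEq α]

theorem sign_permPairs [Finite ι] (e : ι × Fin 2 ≃ α) (τ : Perm ι) :
    Perm.sign (permPairs e τ) = 1 := by
  classical
  have := Fintype.ofFinite ι
  rw [permPairs, Perm.sign_permCongr, Perm.sign_prodCongrLeft, Fin.prod_univ_two,
    Int.units_mul_self]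

theorem sign_smul_pairProd_mul_permPairs [Fintype ι] (e : ι × Fin 2 ≃ α) (M : Matrix α α R)
    (σ : Perm α) (τ : Perm ι) :
    (Perm.sign (σ * permPairs e τ) : ℤ) • pairProd (e.trans (σ * permPairs e τ)) M =
      (Perm.sign σ : ℤ) • pairProd (e.trans σ) M := by
  have htrans : e.trans (σ * permPairs e τ) = (prodCongrLeft fun _ => τ).trans (e.trans σ) := by
    rw [← trans_assoc, ← trans_permPairs]
    rfl
  rw [htrans, pairProd_prodCongrLeft_trans, Perm.sign_mul, sign_permPairs, mul_one]

end PermPairs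

section SumPairs

variable {R ι₁ ι₂ α₁ α₂ : Type*} [CommRing R]

/-- The disjoint union of two listings by pairs. -/
def sumPairs (e₁ : ι₁ × Fin 2 ≃ α₁) (e₂ : ι₂ × Fin 2 ≃ α₂) : (ι₁ ⊕ ι₂) × Fin 2 ≃ α₁ ⊕ α₂ :=
  (sumProdDistrib _ _ _).trans (sumCongr e₁ e₂)

theorem isLeft_sumPairs (e₁ : ι₁ × Fin 2 ≃ α₁) (e₂ : ι₂ × Fin 2 ≃ α₂) (i : ι₁ ⊕ ι₂) (j : Fin 2) :
    (sumPairs e₁ e₂ (i, j)).isLeft = i.isLeft := by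
  cases i <;> rfl

theorem mem_range_sumCongrHom_iff [Finite α₁] [Finite α₂] {σ : Perm (α₁ ⊕ α₂)} :
    σ ∈ (Perm.sumCongrHom α₁ α₂).range ↔ ∀ x, (σ x).isLeft = x.isLeft := by
  constructor
  · rintro ⟨⟨σ₁, σ₂⟩, rfl⟩ (x | x) <;> rfl
  · intro h
    refine Perm.mem_sumCongrHom_range_of_perm_mapsTo_inl ?_
    rintro _ ⟨x, rfl⟩
    obtain ⟨y, hy⟩ := Sum.isLeft_iff.1 (h (Sum.inl x))
    exact ⟨y, hy.symm⟩

theorem permPairs_sumPairs_mem_range_iff [Finite ι₁] [Finite ι₂] [Finite α₁] [Finite α₂]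
    (e₁ : ι₁ × Fin 2 ≃ α₁) (e₂ : ι₂ × Fin 2 ≃ α₂) (τ : Perm (ι₁ ⊕ ι₂)) :
    permPairs (sumPairs e₁ e₂) τ ∈ (Perm.sumCongrHom α₁ α₂).range ↔
      τ ∈ (Perm.sumCongrHom ι₁ ι₂).range := by
  rw [mem_range_sumCongrHom_iff, mem_range_sumCongrHom_iff,
    (sumPairs e₁ e₂).surjective.forall, Prod.forall]
  simp [isLeft_sumPairs]

theorem exists_mul_permPairs_mem_range [Finite ι₁] [Finite ι₂] [Finite α₁] [Finite α₂]
    (e₁ : ι₁ × Fin 2 ≃ α₁) (e₂ : ι₂ × Fin 2 ≃ α₂) (σ : Perm (α₁ ⊕ α₂))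
    (hσ : ∀ i, (σ (sumPairs e₁ e₂ (i, 0))).isLeft = (σ (sumPairs e₁ e₂ (i, 1))).isLeft) :
    ∃ τ, σ * permPairs (sumPairs e₁ e₂) τ ∈ (Perm.sumCongrHom α₁ α₂).range := by
  have := Fintype.ofFinite ι₁
  have := Fintype.ofFinite ι₂
  have := Fintype.ofFinite α₁
  have hcard : Fintype.card α₁ = 2 * Fintype.card ι₁ := by
    rw [← Fintype.card_congr e₁, Fintype.card_prod, Fintype.card_fin, mul_comm]
  obtain ⟨τ, hτ⟩ := exists_perm_isLeft_pairs (e := (sumPairs e₁ e₂).trans σ) hσ hcard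
  refine ⟨τ, mem_range_sumCongrHom_iff.2 ?_⟩
  rw [(sumPairs e₁ e₂).surjective.forall, Prod.forall]
  intro i j
  rw [Perm.mul_apply, permPairs_apply, isLeft_sumPairs, ← hτ i]
  fin_cases j
  · rfl
  · exact (hσ (τ i)).symm

variable [Fintype ι₁] [Fintype ι₂] [Fintype α₁] [Fintype α₂] [DecidableEq α₁] [DecidableEq α₂]

theorem card_mul_permPairs_mem_range [DecidableEq ι₁] [DecidableEq ι₂]
    (e₁ : ι₁ × Fin 2 ≃ α₁) (e₂ : ι₂ × Fin 2 ≃ α₂) {σ : Perm (α₁ ⊕ α₂)}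
    (hσ : ∀ i, (σ (sumPairs e₁ e₂ (i, 0))).isLeft = (σ (sumPairs e₁ e₂ (i, 1))).isLeft) :
    #{τ | σ * permPairs (sumPairs e₁ e₂) τ ∈ (Perm.sumCongrHom α₁ α₂).range} =
      (Fintype.card ι₁).factorial * (Fintype.card ι₂).factorial := by
  obtain ⟨τ₀, hτ₀⟩ := exists_mul_permPairs_mem_range e₁ e₂ σ hσ
  have hcoset (τ : Perm (ι₁ ⊕ ι₂)) :
      σ * permPairs (sumPairs e₁ e₂) (τ₀ * τ) ∈ (Perm.sumCongrHom α₁ α₂).range ↔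
        τ ∈ (Perm.sumCongrHom ι₁ ι₂).range := by
    rw [permPairs_mul, ← mul_assoc, Subgroup.mul_mem_cancel_left _ hτ₀,
      permPairs_sumPairs_mem_range_iff]
  rw [← Fintype.card_perm, ← Fintype.card_perm, ← Fintype.card_prod,
    ← Perm.sumCongrHom.card_range, Fintype.card_subtype]
  refine (card_equiv (Equiv.mulLeft τ₀) fun τ => ?_).symm
  rw [coe_mulLeft, mem_filter_univ, mem_filter_univ, hcoset]

theorem sum_range_sumCongrHom {M : Type*} [AddCommMonoid M] (F : Perm (α₁ ⊕ α₂) → M) :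
    ∑ σ with σ ∈ (Perm.sumCongrHom α₁ α₂).range, F σ = ∑ σ₁, ∑ σ₂, F (sumCongr σ₁ σ₂) := by
  have himage : ({σ | σ ∈ (Perm.sumCongrHom α₁ α₂).range} : Finset (Perm (α₁ ⊕ α₂))) =
      univ.image (Perm.sumCongrHom α₁ α₂) := by
    ext σ
    simp
  rw [himage, sum_image Perm.sumCongrHom_injective.injOn, ← univ_product_univ, sum_product]
  rfl

theorem sum_mul_permPairs_mem_range (e₁ : ι₁ × Fin 2 ≃ α₁) (e₂ : ι₂ × Fin 2 ≃ α₂)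
    (M₁ : Matrix α₁ α₁ R) (M₂ : Matrix α₂ α₂ R) (τ : Perm (ι₁ ⊕ ι₂)) :
    ∑ σ with σ * permPairs (sumPairs e₁ e₂) τ ∈ (Perm.sumCongrHom α₁ α₂).range,
        (Perm.sign σ : ℤ) • pairProd ((sumPairs e₁ e₂).trans σ) (fromBlocks M₁ 0 0 M₂) =
      pairingSum e₁ M₁ * pairingSum e₂ M₂ := by
  calc
    _ = ∑ σ with σ ∈ (Perm.sumCongrHom α₁ α₂).range,
        (Perm.sign σ : ℤ) • pairProd ((sumPairs e₁ e₂).trans σ) (fromBlocks M₁ 0 0 M₂) := by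
      refine sum_equiv (Equiv.mulRight (permPairs (sumPairs e₁ e₂) τ)) (by simp) fun σ _ => ?_
      exact (sign_smul_pairProd_mul_permPairs _ _ σ τ).symm
    _ = _ := by
      rw [sum_range_sumCongrHom, pairingSum, pairingSum, sum_mul_sum]
      refine sum_congr rfl fun σ₁ _ => sum_congr rfl fun σ₂ _ => ?_
      rw [Perm.sign_sumCongr, Units.val_mul, smul_mul_smul_comm, pairProd, Fintype.prod_sum_type]
      rfl

/- Both sides sum over the `(σ, τ)` for which `σ * permPairs e τ` preserves the two blocks: for fixed
`σ` with nonzero contribution these `τ` form a coset of `Perm ι₁ × Perm ι₂`, and for fixed `τ` these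
`σ` form a coset of `Perm α₁ × Perm α₂`. -/
theorem factorial_smul_pairingSum_fromBlocks (e₁ : ι₁ × Fin 2 ≃ α₁) (e₂ : ι₂ × Fin 2 ≃ α₂)
    (M₁ : Matrix α₁ α₁ R) (M₂ : Matrix α₂ α₂ R) :
    ((Fintype.card ι₁).factorial * (Fintype.card ι₂).factorial) •
        pairingSum (sumPairs e₁ e₂) (fromBlocks M₁ 0 0 M₂) =
      (Fintype.card ι₁ + Fintype.card ι₂).factorial • (pairingSum e₁ M₁ * pairingSum e₂ M₂) := by
  classical
  let e := sumPairs e₁ e₂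
  let H := (Perm.sumCongrHom α₁ α₂).range
  let F (σ : Perm (α₁ ⊕ α₂)) := (Perm.sign σ : ℤ) • pairProd (e.trans σ) (fromBlocks M₁ 0 0 M₂)
  have hcard (σ) : ((Fintype.card ι₁).factorial * (Fintype.card ι₂).factorial) • F σ =
      #{τ | σ * permPairs e τ ∈ H} • F σ := by
    by_cases hσ : ∀ i, (σ (e (i, 0))).isLeft = (σ (e (i, 1))).isLeft
    · rw [card_mul_permPairs_mem_range e₁ e₂ hσ]
    · obtain ⟨i, hi⟩ := not_forall.1 hσ
      simp only [F, pairProd_fromBlocks_zero_of_split (e := e.trans σ) hi, smul_zero]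
  calc
    _ = ∑ σ, #{τ | σ * permPairs e τ ∈ H} • F σ := by
      simp only [← hcard, ← smul_sum]
      rfl
    _ = ∑ σ, ∑ τ with σ * permPairs e τ ∈ H, F σ := by simp only [sum_const]
    _ = ∑ τ, ∑ σ with σ * permPairs e τ ∈ H, F σ := sum_comm' (by simp)
    _ = ∑ _τ : Perm (ι₁ ⊕ ι₂), pairingSum e₁ M₁ * pairingSum e₂ M₂ :=
      sum_congr rfl fun τ _ => sum_mul_permPairs_mem_range e₁ e₂ M₁ M₂ τ
    _ = _ := by rw [sum_const, card_univ, Fintype.card_perm, Fintype.card_sum]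

end SumPairs

section Pfaffian

variable {R S α : Type*} [CommRing R] [CommRing S] [Fintype α] [DecidableEq α] {m n N : ℕ}

/-- The listing `(0, 1), (2, 3), …` of `Fin n` by consecutive pairs. -/
def consecutivePairs (hn : Even n) : Fin (n / 2) × Fin 2 ≃ Fin n :=
  finProdFinEquiv.trans (finCongr (Nat.div_mul_cancel hn.two_dvd))

theorem val_consecutivePairs (hn : Even n) (i : Fin (n / 2)) (j : Fin 2) :
    (consecutivePairs hn (i, j)).1 = 2 * i.1 + j.1 := by
  simp [consecutivePairs, add_comm]

theorem pairingSum_consecutivePairs_trans_finSumFinEquiv_symm (hm : Even m) (hn : Even n)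
    (M : Matrix (Fin m ⊕ Fin n) (Fin m ⊕ Fin n) R) :
    pairingSum ((consecutivePairs (hm.add hn)).trans finSumFinEquiv.symm) M =
      pairingSum (sumPairs (consecutivePairs hm) (consecutivePairs hn)) M := by
  have hdiv : m / 2 + n / 2 = (m + n) / 2 := (Nat.add_div_of_dvd_right hm.two_dvd).symm
  let f : Fin (m / 2) ⊕ Fin (n / 2) ≃ Fin ((m + n) / 2) := finSumFinEquiv.trans (finCongr hdiv)
  have hf : (prodCongrLeft fun _ => f).trans
      ((consecutivePairs (hm.add hn)).trans finSumFinEquiv.symm) =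
        sumPairs (consecutivePairs hm) (consecutivePairs hn) := by
    ext x
    apply finSumFinEquiv.injective
    have hm₂ : 2 * (m / 2) = m := Nat.two_mul_div_two_of_even hm
    obtain ⟨i | i, j⟩ := x <;> ext
    · simp [f, sumPairs, val_consecutivePairs]
    · simp [f, sumPairs, val_consecutivePairs, mul_add, add_assoc, hm₂]
  rw [← hf, pairingSum_prodCongrLeft_trans]

variable [Algebra ℚ R] [Algebra ℚ S]

theorem pfaffian_eq_smul_pairingSum (hn : Even n) (M : Matrix (Fin n) (Fin n) R) :
    pfaffian M =
      ((2 ^ (n / 2) * (n / 2).factorial : ℚ)⁻¹) • pairingSum (consecutivePairs hn) M := by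
  rw [pfaffian, pairingSum]
  refine congrArg _ (sum_congr rfl fun σ _ => congrArg _ (prod_congr rfl fun i _ => ?_))
  have h₀ : consecutivePairs hn (i, 0) = ⟨2 * i.1, by omega⟩ :=
    Fin.ext (val_consecutivePairs hn i 0)
  have h₁ : consecutivePairs hn (i, 1) = ⟨2 * i.1 + 1, by omega⟩ :=
    Fin.ext (val_consecutivePairs hn i 1)
  rw [Equiv.trans_apply, Equiv.trans_apply, h₀, h₁]

theorem pfaffian_reindex (hn : Even n) (g : α ≃ Fin n) (M : Matrix α α R) :
    pfaffian (reindex g g M) = ((2 ^ (n / 2) * (n / 2).factorial : ℚ)⁻¹) •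
      pairingSum ((consecutivePairs hn).trans g.symm) M := by
  rw [pfaffian_eq_smul_pairingSum hn, pairingSum_trans, reindex_apply]

theorem pfaffian_reindex_perm (hn : Even n) (τ : Perm (Fin n)) (M : Matrix (Fin n) (Fin n) R) :
    pfaffian (reindex τ τ M) = (Perm.sign τ : ℤ) • pfaffian M := by
  rw [pfaffian_reindex hn, pairingSum_trans_perm, pfaffian_eq_smul_pairingSum hn, Perm.sign_symm,
    smul_comm]

theorem hasQuotientValue_pfaffian_reindex {φ : R →+* S} {t : R} (ht : φ t = 0) (hN : Even N)
    (g : Fin m ⊕ Fin n ≃ Fin N) (B₁₁ : Matrix (Fin m) (Fin m) R) (B₁₂ : Matrix (Fin m) (Fin n) R)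
    (B₂₁ : Matrix (Fin n) (Fin m) R) (M₂₂ : Matrix (Fin n) (Fin n) R) :
    HasQuotientValue φ t (m / 2)
      (pfaffian (reindex g g (fromBlocks (t • B₁₁) (t • B₁₂) (t • B₂₁) M₂₂)))
      (pfaffian (reindex g g (fromBlocks (B₁₁.map φ) 0 0 (M₂₂.map φ)))) := by
  rw [pfaffian_reindex hN, pfaffian_reindex hN]
  simpa only [Fintype.card_fin] using
    (hasQuotientValue_pairingSum ht _ B₁₁ B₁₂ B₂₁ M₂₂).rat_smul _

theorem pfaffian_reindex_fromBlocks_zero (hm : Even m) (hn : Even n)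
    (M₁ : Matrix (Fin m) (Fin m) R) (M₂ : Matrix (Fin n) (Fin n) R) :
    pfaffian (reindex finSumFinEquiv finSumFinEquiv (fromBlocks M₁ 0 0 M₂)) =
      pfaffian M₁ * pfaffian M₂ := by
  have key := factorial_smul_pairingSum_fromBlocks (consecutivePairs hm) (consecutivePairs hn) M₁ M₂
  simp only [Fintype.card_fin, ← Nat.cast_smul_eq_nsmul ℚ, Nat.cast_mul] at key
  rw [← eq_inv_smul_iff₀ (by positivity), smul_smul] at key
  rw [pfaffian_reindex (hm.add hn), pairingSum_consecutivePairs_trans_finSumFinEquiv_symm hm hn,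
    pfaffian_eq_smul_pairingSum hm, pfaffian_eq_smul_pairingSum hn, smul_mul_smul_comm,
    Nat.add_div_of_dvd_right hm.two_dvd, key, smul_smul]
  congr 1
  field_simp
  ring

end Pfaffian

section MoveBlock

variable {R : Type*} [CommRing R] [Algebra ℚ R] {N a b : ℕ}

theorem val_finRotate_pow {n : ℕ} (k : ℕ) (i : Fin n) :
    ((finRotate n ^ k) i).1 = (i.1 + k) % n := by
  have := i.neZero
  induction k with
  | zero => simp [Nat.mod_eq_of_lt i.2]
  | succ k ih =>
    rw [pow_succ', Perm.mul_apply, finRotate_apply, Fin.val_add, ih]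
    simp [add_assoc]

/-- The permutation of `Fin N` which moves the first `b` indices cyclically `a` places up. -/
def rotateInitial (hbN : b ≤ N) (a : ℕ) : Perm (Fin N) :=
  (finSumFinEquiv.trans (finCongr (Nat.add_sub_cancel' hbN))).permCongr
    (Perm.sumCongr (finRotate b ^ a) 1)

theorem val_rotateInitial (hbN : b ≤ N) (a : ℕ) (x : Fin N) :
    (rotateInitial hbN a x).1 = if x.1 < b then (x.1 + a) % b else x.1 := by
  obtain ⟨y, rfl⟩ :=
    (finSumFinEquiv.trans (finCongr (Nat.add_sub_cancel' hbN))).surjective x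
  rcases y with y | y <;> simp [rotateInitial, permCongr_apply, val_finRotate_pow]

theorem sign_rotateInitial (hab : a ≤ b) (hbN : b ≤ N) (hba : Even (b - a)) :
    Perm.sign (rotateInitial hbN a) = 1 := by
  have heven : Even ((b - 1) * a) := by
    rw [Nat.even_sub hab] at hba
    grind
  rw [rotateInitial, Perm.sign_permCongr, Perm.sign_sumCongr, map_pow, sign_finRotate, ← pow_mul,
    heven.neg_one_pow, map_one, one_mul]

/-- `Fin N` as the disjoint union of the block `[a, b)` and its complement. -/
def blockSumEquiv (hab : a ≤ b) (hbN : b ≤ N) : Fin (b - a) ⊕ Fin (N - (b - a)) ≃ Fin N :=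
  (finSumFinEquiv.trans (finCongr (by omega))).trans (rotateInitial hbN a)

theorem blockSumEquiv_inl (hab : a ≤ b) (hbN : b ≤ N) (j : Fin (b - a)) :
    blockSumEquiv hab hbN (Sum.inl j) = ⟨a + j.1, by omega⟩ := by
  ext
  have hval : (blockSumEquiv hab hbN (Sum.inl j)).1 = if j.1 < b then (j.1 + a) % b else j.1 :=
    val_rotateInitial hbN a _
  have hj : j.1 + a < b := by omega
  rw [hval, if_pos (by omega), Nat.mod_eq_of_lt hj, add_comm]

theorem blockSumEquiv_inr (hab : a ≤ b) (hbN : b ≤ N) (i : Fin (N - (b - a))) :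
    blockSumEquiv hab hbN (Sum.inr i) = delEmb N a b i := by
  ext
  have hval : (blockSumEquiv hab hbN (Sum.inr i)).1 =
      if b - a + i.1 < b then (b - a + i.1 + a) % b else b - a + i.1 := val_rotateInitial hbN a _
  rw [hval, delEmb]
  by_cases hi : i.1 < a
  · have hadd : b - a + i.1 + a = i.1 + b := by omega
    rw [if_pos (by omega), if_pos hi, hadd, Nat.add_mod_right, Nat.mod_eq_of_lt (by omega)]
  · rw [if_neg (by omega), if_neg hi, add_comm]

theorem pfaffian_reindex_finCongr {m n : ℕ} (h : m = n) (M : Matrix (Fin m) (Fin m) R) :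
    pfaffian (reindex (finCongr h) (finCongr h) M) = pfaffian M := by
  subst h
  rfl

theorem pfaffian_reindex_blockSumEquiv (hab : a ≤ b) (hbN : b ≤ N) (hN : Even N)
    (hba : Even (b - a)) (M₁ : Matrix (Fin (b - a)) (Fin (b - a)) R)
    (M₂ : Matrix (Fin (N - (b - a))) (Fin (N - (b - a))) R) :
    pfaffian (reindex (blockSumEquiv hab hbN) (blockSumEquiv hab hbN) (fromBlocks M₁ 0 0 M₂)) =
      pfaffian M₁ * pfaffian M₂ := by
  let e : Fin (b - a + (N - (b - a))) ≃ Fin N := finCongr (by omega)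
  let M := reindex finSumFinEquiv finSumFinEquiv (fromBlocks M₁ 0 0 M₂)
  calc
    _ = pfaffian (reindex (rotateInitial hbN a) (rotateInitial hbN a) (reindex e e M)) := rfl
    _ = pfaffian (reindex e e M) := by
      rw [pfaffian_reindex_perm hN, sign_rotateInitial hab hbN hba, Units.val_one, one_zsmul]
    _ = pfaffian M := pfaffian_reindex_finCongr _ M
    _ = _ := pfaffian_reindex_fromBlocks_zero hba (hN.tsub hba) M₁ M₂

end MoveBlock

theorem stmt_14_general {R S : Type*} [CommRing R] [Algebra ℚ R] [CommRing S] [Algebra ℚ S]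
    (φ : R →+* S) {t : R} (ht : φ t = 0) {N a b : ℕ} (hab : a ≤ b) (hbN : b ≤ N)
    (hN : Even N) (hba : Even (b - a)) (A B : Matrix (Fin N) (Fin N) R)
    (hAB : ∀ i j : Fin N, (a ≤ i.1 ∧ i.1 < b) ∨ (a ≤ j.1 ∧ j.1 < b) → A i j = t * B i j) :
    ∃ q : R, pfaffian A = t ^ ((b - a) / 2) * q ∧
      φ q =
        pfaffian (Matrix.of fun i j : Fin (N - (b - a)) =>
            φ (A (delEmb N a b i) (delEmb N a b j))) *
          pfaffian (Matrix.of fun i j : Fin (b - a) =>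
            φ (B ⟨a + i.1, by omega⟩ ⟨a + j.1, by omega⟩)) := by
  let g := blockSumEquiv hab hbN
  have hblock (j : Fin (b - a)) : a ≤ (g (Sum.inl j)).1 ∧ (g (Sum.inl j)).1 < b := by
    rw [blockSumEquiv_inl]
    exact ⟨Nat.le_add_right _ _, by dsimp only; omega⟩
  let C := B.submatrix g g
  let D := A.submatrix g g
  have hA : A = reindex g g
      (fromBlocks (t • C.toBlocks₁₁) (t • C.toBlocks₁₂) (t • C.toBlocks₂₁) D.toBlocks₂₂) := by
    rw [← Equiv.symm_apply_eq]
    ext (i | i) (j | j)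
    · exact hAB _ _ (.inl (hblock i))
    · exact hAB _ _ (.inl (hblock i))
    · exact hAB _ _ (.inr (hblock j))
    · rfl
  have hD : D.toBlocks₂₂.map φ = of fun i j => φ (A (delEmb N a b i) (delEmb N a b j)) := by
    ext i j
    exact congrArg φ (congrArg₂ A (blockSumEquiv_inr hab hbN i) (blockSumEquiv_inr hab hbN j))
  have hC : C.toBlocks₁₁.map φ = of fun i j : Fin (b - a) =>
      φ (B ⟨a + i.1, by omega⟩ ⟨a + j.1, by omega⟩) := by
    ext i j
    exact congrArg φ (congrArg₂ B (blockSumEquiv_inl hab hbN i) (blockSumEquiv_inl hab hbN j))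
  have key := hasQuotientValue_pfaffian_reindex ht hN g
    C.toBlocks₁₁ C.toBlocks₁₂ C.toBlocks₂₁ D.toBlocks₂₂
  rw [← hA, pfaffian_reindex_blockSumEquiv hab hbN hN hba, mul_comm, hC, hD] at key
  exact key

theorem stmt_14 (N a b : ℕ) (ha : 0 < a) (hab : a < b) (hbN : b ≤ N)
    (hN : Even N) (hba : Even (b - a)) (s : ℝ)
    (A : Matrix (Fin N) (Fin N) (Polynomial ℝ))
    (hskew : ∀ i j, A j i = -A i j)
    (hdvd : ∀ i j : Fin N, a ≤ i.1 → i.1 < b →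
      (Polynomial.X + Polynomial.C s) ∣ A i j) :
    ∃ q : Polynomial ℝ,
      pfaffian A = (Polynomial.X + Polynomial.C s) ^ ((b - a) / 2) * q ∧
      q.eval (-s) =
        pfaffian (Matrix.of fun i j : Fin (N - (b - a)) =>
            Polynomial.eval (-s) (A (delEmb N a b i) (delEmb N a b j))) *
          pfaffian (Matrix.of fun i j : Fin (b - a) =>
            Polynomial.eval (-s)
              (A ⟨a + i.1, by have := i.2; omega⟩ ⟨a + j.1, by have := j.2; omega⟩ /
                (Polynomial.X + Polynomial.C s))) := by
  have hmem (i j : Fin N) (h : (a ≤ i.1 ∧ i.1 < b) ∨ (a ≤ j.1 ∧ j.1 < b)) :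
      Polynomial.X + Polynomial.C s ∣ A i j :=
    h.elim (fun hi => hdvd i j hi.1 hi.2) fun hj => hskew j i ▸ (hdvd j i hj.1 hj.2).neg_right
  simpa only [Polynomial.coe_evalRingHom] using
    stmt_14_general (Polynomial.evalRingHom (-s)) (by simp) hab.le hbN hN hba A
      (fun i j => A i j / (Polynomial.X + Polynomial.C s)) fun i j h =>
        (EuclideanDomain.mul_div_cancel' (Polynomial.X_add_C_ne_zero s) (hmem i j h)).symm
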